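/- Let $V\in\mathbb{Q}[[X,E]]$ be the unique solution with zero constant term of the difference equation $\sum_{0\le\alpha_1\le\cdots\le\alpha_m\le n}\exp\big(\sum_{j=1}^{m}S_{\alpha_j m-(j-1/2)n}(V)\big)=\binom{m+n}{m}\,(1+X)$. Then: (i) $V$ contains only even powers of $E$ (the coefficient of $E^{2g+1}$ vanishes for every $g\ge0$); (ii) the specialization of $V$ at $E=0$ equals $\frac1m\log(1+X)$, the formal power series logarithm; and (iii) for every $g\ge1$ there exists a rational number $P_g(m,n)$ such that the coefficient of $E^{2g}$ in $V$, an element of $\mathbb{Q}[[X]]$, equals $P_g(m,n)\,(1+X)^{-2g}$. That is, $V$ has the form $V=\frac1m\log x+\sum_{g\ge1}\epsilon^{2g}\,P_g(m,n)\,x^{-2g}$ with $x=1+X$. -/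

import Mathlib

open MvPowerSeries

/-- The formal exponential of a multivariate power series (with zero constant term),
`fexp V = ∑_{n≥0} V^n / n!`, defined coefficientwise. -/
noncomputable def fexp (V : MvPowerSeries (Fin 2) ℚ) : MvPowerSeries (Fin 2) ℚ :=
  fun d => ∑ n ∈ Finset.range (d 0 + d 1 + 1),
    (Nat.factorial n : ℚ)⁻¹ * MvPowerSeries.coeff d (V ^ n)

/-- The shift `S_c : x ↦ x + cε`, i.e. the continuous `ℚ`-algebra endomorphism of
`ℚ[[X,E]]` with `S_c(X) = X + c·E` and `S_c(E) = E`, described coefficientwise. -/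
noncomputable def shiftS (c : ℚ) (V : MvPowerSeries (Fin 2) ℚ) : MvPowerSeries (Fin 2) ℚ :=
  fun d => ∑ t ∈ Finset.range (d 1 + 1),
    (Nat.choose (d 0 + t) t : ℚ) * c ^ t *
      MvPowerSeries.coeff (Finsupp.single 0 (d 0 + t) + Finsupp.single 1 (d 1 - t)) V

/-- The difference equation
`∑_{0 ≤ α_1 ≤ ⋯ ≤ α_m ≤ n} exp(∑_{j=1}^m S_{α_j m - (j-1/2) n}(V)) = C(m+n,m)·(1+X)`. -/
def diffEq (m n : ℕ) (V : MvPowerSeries (Fin 2) ℚ) : Prop :=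
  ∑ α ∈ Finset.univ.filter
      (fun α : Fin m → Fin (n + 1) => ∀ i j : Fin m, i ≤ j → α i ≤ α j),
    fexp (∑ j : Fin m, shiftS ((α j : ℚ) * m - (((j : ℕ) : ℚ) + 1 / 2) * n) V)
  = (Nat.choose (m + n) m : MvPowerSeries (Fin 2) ℚ) * (1 + MvPowerSeries.X 0)

/-- The formal power series `log(1+X) = ∑_{i≥1} (-1)^{i+1} X^i / i` in `ℚ[[X]]`. -/
noncomputable def logOneAdd : PowerSeries ℚ :=
  PowerSeries.mk fun i => if i = 0 then 0 else (-1) ^ (i + 1) / (i : ℚ)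

abbrev GF := MvPowerSeries (Fin 2) ℚ

noncomputable abbrev gidx (i k : ℕ) : Fin 2 →₀ ℕ := Finsupp.single 0 i + Finsupp.single 1 k

lemma gidx_zero (i k : ℕ) : gidx i k 0 = i := by simp [gidx]
lemma gidx_one (i k : ℕ) : gidx i k 1 = k := by simp [gidx]

lemma gidx_eta (d : Fin 2 →₀ ℕ) : gidx (d 0) (d 1) = d := by
  ext j
  fin_cases j
  · exact gidx_zero _ _
  · exact gidx_one _ _

lemma coeff_shiftS (c : ℚ) (V : GF) (d : Fin 2 →₀ ℕ) :
    coeff d (shiftS c V) = ∑ t ∈ Finset.range (d 1 + 1),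
    (Nat.choose (d 0 + t) t : ℚ) * c ^ t * coeff (gidx (d 0 + t) (d 1 - t)) V := rfl

lemma shiftS_sub (c : ℚ) (V W : GF) : shiftS c (V - W) = shiftS c V - shiftS c W := by
  ext d
  rw [map_sub, coeff_shiftS, coeff_shiftS, coeff_shiftS, ← Finset.sum_sub_distrib]
  refine Finset.sum_congr rfl fun t _ => ?_
  rw [map_sub]; ring

lemma constCoeff_shiftS (c : ℚ) (V : GF) : constantCoeff (shiftS c V) = constantCoeff V := by
  rw [← coeff_zero_eq_constantCoeff_apply, ← coeff_zero_eq_constantCoeff_apply, coeff_shiftS]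
  have : gidx 0 0 = 0 := by simp [gidx]
  simp [-gidx, this]

lemma shiftS_C (c a : ℚ) : shiftS c (C a : GF) = C a := by
  classical
  ext d
  rw [coeff_shiftS, Finset.sum_range_succ']
  rw [Finset.sum_eq_zero]
  · simp only [Nat.add_zero, Nat.choose_zero_right, Nat.sub_zero, gidx_eta]; simp
  · intro t _
    rw [coeff_C, if_neg]
    · simp
    · intro h
      have := congrArg (fun f => f 0) h
      simp at this

lemma coeff_mul_low (D Q : GF) (d : Fin 2 →₀ ℕ) (h : ∀ e < d, coeff e D = 0) :
    coeff d (D * Q) = coeff d D * constantCoeff Q := by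
  classical
  rw [coeff_mul, Finset.sum_eq_single (d, 0)]
  · simp
  · rintro ⟨a, b⟩ hab hne
    rw [Finset.HasAntidiagonal.mem_antidiagonal] at hab
    simp only at hab ⊢
    rw [h a, zero_mul]
    have : a ≤ d := by rw [← hab]; exact le_self_add
    refine lt_of_le_of_ne this ?_
    rintro rfl
    apply hne
    have : b = 0 := by simpa using hab
    rw [this]
  · intro h; simp at h

/-- all coefficients lexicographically below `d` (first `E`, then `X`) vanish -/
def LowVanish (W : GF) (d : Fin 2 →₀ ℕ) : Prop :=
  ∀ i k : ℕ, (k < d 1 ∨ (k = d 1 ∧ i < d 0)) → coeff (gidx i k) W = 0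

lemma lex_ind (W : GF) (h : ∀ d, LowVanish W d → coeff d W = 0) : W = 0 := by
  have key : ∀ k i : ℕ, coeff (gidx i k) W = 0 := by
    intro k
    induction k using Nat.strong_induction_on with
    | _ k ihk =>
      intro i
      induction i using Nat.strong_induction_on with
      | _ i ihi =>
        apply h
        intro i' k' h'
        rw [gidx_zero, gidx_one] at h'
        rcases h' with h' | ⟨rfl, h'⟩
        · exact ihk _ h' _
        · exact ihi _ h'
  ext d
  rw [← gidx_eta d, key]; simp

lemma LowVanish.shift {W : GF} {d : Fin 2 →₀ ℕ} (h : LowVanish W d) (c : ℚ) :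
    (∀ e < d, coeff e (shiftS c W) = 0) ∧ coeff d (shiftS c W) = coeff d W := by
  have gen : ∀ e ≤ d, coeff e (shiftS c W) = coeff e W := by
    intro e he
    rw [coeff_shiftS, Finset.sum_range_succ', Finset.sum_eq_zero]
    · simp only [Nat.add_zero, Nat.choose_zero_right, Nat.sub_zero, gidx_eta]; simp
    · intro t ht
      rw [h, mul_zero]
      left
      have := he 1
      rw [Finset.mem_range] at ht
      omega
  refine ⟨fun e he => ?_, gen d le_rfl⟩
  rw [gen e he.le, ← gidx_eta e]
  apply h
  have h0 := he.le 0
  have h1 := he.le 1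
  by_contra hc
  apply he.ne
  rw [← gidx_eta e, ← gidx_eta d]
  have : e 0 = d 0 := by omega
  have : e 1 = d 1 := by omega
  simp [*]

lemma LowVanish.sumShift {W : GF} {d : Fin 2 →₀ ℕ} (h : LowVanish W d) {m : ℕ} (c : Fin m → ℚ) :
    (∀ e < d, coeff e (∑ j, shiftS (c j) W) = 0) ∧
      coeff d (∑ j, shiftS (c j) W) = m * coeff d W := by
  constructor
  · intro e he
    rw [map_sum]
    exact Finset.sum_eq_zero fun j _ => (h.shift (c j)).1 e he
  · rw [map_sum, Finset.sum_congr rfl fun j _ => (h.shift (c j)).2]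
    simp

lemma coeff_pow_eq_zero {A : GF} (hA : constantCoeff A = 0) {n : ℕ} {d : Fin 2 →₀ ℕ}
    (h : d 0 + d 1 < n) : coeff d (A ^ n) = 0 := by
  apply coeff_of_lt_order
  refine lt_of_lt_of_le ?_ (le_order_pow_of_constantCoeff_eq_zero n hA)
  rw [Finsupp.degree_eq_sum]
  simpa using (by exact_mod_cast h)

noncomputable def texp (N : ℕ) (A : GF) : GF :=
  ∑ n ∈ Finset.range N, C ((Nat.factorial n : ℚ)⁻¹) * A ^ n

lemma coeff_fexp {A : GF} (hA : constantCoeff A = 0) {N : ℕ} {d : Fin 2 →₀ ℕ}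
    (h : d 0 + d 1 < N) : coeff d (fexp A) = coeff d (texp N A) := by
  have : coeff d (fexp A) = ∑ n ∈ Finset.range (d 0 + d 1 + 1),
    (Nat.factorial n : ℚ)⁻¹ * MvPowerSeries.coeff d (A ^ n) := rfl
  rw [this, texp, map_sum]
  simp only [coeff_C_mul]
  apply Finset.sum_subset
  · intro x; simp only [Finset.mem_range]; omega
  · intro x _ hx
    rw [coeff_pow_eq_zero hA, mul_zero]
    simp only [Finset.mem_range] at hx; omega

lemma constCoeff_fexp (A : GF) : constantCoeff (fexp A) = 1 := by
  rw [← coeff_zero_eq_constantCoeff_apply]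
  have : coeff 0 (fexp A) = ∑ n ∈ Finset.range (0 + 0 + 1),
    (Nat.factorial n : ℚ)⁻¹ * MvPowerSeries.coeff 0 (A ^ n) := rfl
  rw [this]; simp

/-- difference of exponentials at the lowest place -/
lemma coeff_fexp_sub {A B : GF} (hA : constantCoeff A = 0) (hB : constantCoeff B = 0)
    (d : Fin 2 →₀ ℕ) (h : ∀ e < d, coeff e (A - B) = 0) :
    coeff d (fexp A) - coeff d (fexp B) = coeff d (A - B) := by
  have h1 : ∀ n, coeff d (A ^ n) - coeff d (B ^ n) = if n = 1 then coeff d (A - B) else 0 := by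
    intro n
    rw [← map_sub, ← (Commute.all A B).mul_geom_sum₂, coeff_mul_low _ _ _ h]
    rw [map_sum]
    simp only [map_mul, map_pow, hA, hB]
    split_ifs with hn
    · subst hn; simp
    · rw [Finset.sum_eq_zero, mul_zero]
      intro i hi
      rw [Finset.mem_range] at hi
      rcases Nat.eq_zero_or_pos i with rfl | hi0
      · rw [zero_pow (n := n - 1 - 0) (by omega), mul_zero]
      · rw [zero_pow (by omega), zero_mul]
  rw [coeff_fexp hA (N := d 0 + d 1 + 2) (by omega), coeff_fexp hB (N := d 0 + d 1 + 2) (by omega),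
    texp, texp, map_sum, map_sum, ← Finset.sum_sub_distrib]
  simp only [coeff_C_mul, ← mul_sub, h1]
  rw [Finset.sum_eq_single 1]
  · simp
  · intro b _ hb; simp [hb]
  · intro hh; simp at hh

/-- Euler derivation -/
noncomputable def eulerD : Derivation ℚ GF GF :=
  (1 + X 0 : GF) • pderiv ℚ 0 + (X 1 : GF) • pderiv ℚ 1

lemma coeff_X_mul_pderiv (s : Fin 2) (f : GF) (d : Fin 2 →₀ ℕ) :
    coeff d (X s * pderiv ℚ s f) = d s * coeff d f := by
  by_cases h : d s = 0
  · rw [X_dvd_iff.1 (dvd_mul_right (X s) (pderiv ℚ s f)) d h, h]; simp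
  · obtain ⟨e, rfl⟩ : ∃ e, d = Finsupp.single s 1 + e :=
      ⟨d - Finsupp.single s 1, by
        rw [add_tsub_cancel_of_le]
        rw [Finsupp.single_le_iff]; omega⟩
    rw [X_def, coeff_add_monomial_mul, coeff_pderiv, one_mul, add_comm e]
    simp; ring

lemma coeff_eulerD (f : GF) (i k : ℕ) :
    coeff (gidx i k) (eulerD f) = (i + 1) * coeff (gidx (i + 1) k) f
      + (i + k) * coeff (gidx i k) f := by
  have : eulerD f = pderiv ℚ 0 f + X 0 * pderiv ℚ 0 f + X 1 * pderiv ℚ 1 f := by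
    simp [eulerD, add_mul]
  rw [this, map_add, map_add, coeff_X_mul_pderiv, coeff_X_mul_pderiv, coeff_pderiv,
    gidx_zero, gidx_one]
  have : gidx i k + Finsupp.single 0 1 = gidx (i + 1) k := by
    simp only [gidx, Finsupp.single_add]; abel
  rw [this]; ring

lemma eulerD_shiftS (c : ℚ) (f : GF) : eulerD (shiftS c f) = shiftS c (eulerD f) := by
  ext d
  rw [← gidx_eta d, coeff_eulerD, coeff_shiftS, coeff_shiftS, coeff_shiftS]
  simp only [gidx_zero, gidx_one, coeff_eulerD]
  rw [Finset.mul_sum, Finset.mul_sum, ← Finset.sum_add_distrib]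
  refine Finset.sum_congr rfl fun t ht => ?_
  have ht' : t ≤ d 1 := by rw [Finset.mem_range] at ht; omega
  have e1 : ((d 0 : ℚ) + 1) * (Nat.choose (d 0 + 1 + t) t : ℚ)
      = (d 0 + t + 1) * (Nat.choose (d 0 + t) t : ℚ) := by
    have := Nat.choose_mul_succ_eq (d 0 + t) t
    rw [show d 0 + t + 1 - t = d 0 + 1 by omega] at this
    rw [show d 0 + 1 + t = d 0 + t + 1 by omega]
    have h2 : ((Nat.choose (d 0 + t) t * (d 0 + t + 1) : ℕ) : ℚ)
      = ((Nat.choose (d 0 + t + 1) t * (d 0 + 1) : ℕ) : ℚ) := by rw [this]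
    push_cast at h2
    linarith
  rw [show d 0 + 1 + t = d 0 + t + 1 by omega] at e1 ⊢
  push_cast [Nat.cast_sub ht']
  linear_combination (c ^ t * coeff (gidx (d 0 + t + 1) (d 1 - t)) f) * e1

lemma eulerD_texp (N : ℕ) (A : GF) : eulerD (texp (N + 1) A) = texp N A * eulerD A := by
  rw [texp, map_sum, Finset.sum_range_succ', texp, Finset.sum_mul]
  have hC : ∀ a : ℚ, ∀ g : GF, eulerD (C a * g) = C a * eulerD g := by
    intro a g
    rw [← smul_eq_C_mul, ← smul_eq_C_mul, Derivation.map_smul]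
  rw [hC, pow_zero, Derivation.map_one_eq_zero, mul_zero, add_zero]
  refine Finset.sum_congr rfl fun n _ => ?_
  rw [hC, Derivation.leibniz_pow, Nat.add_sub_cancel, smul_eq_mul, nsmul_eq_mul]
  have : (C ((Nat.factorial n : ℚ)⁻¹) : GF)
      = C ((Nat.factorial (n + 1) : ℚ)⁻¹) * ((n + 1 : ℕ) : GF) := by
    rw [← map_natCast (C (σ := Fin 2) (R := ℚ)), ← map_mul]
    congr 1
    rw [Nat.factorial_succ]
    push_cast
    have : (Nat.factorial n : ℚ) ≠ 0 := by positivity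
    field_simp
  rw [this]; ring

lemma eulerD_fexp {A : GF} (hA : constantCoeff A = 0) :
    eulerD (fexp A) = fexp A * eulerD A := by
  classical
  ext d
  have h1 : coeff d (eulerD (fexp A)) = coeff d (eulerD (texp (d 0 + d 1 + 1 + 1) A)) := by
    rw [← gidx_eta d, coeff_eulerD, coeff_eulerD, coeff_fexp hA (N := d 0 + d 1 + 1 + 1),
      coeff_fexp hA (N := d 0 + d 1 + 1 + 1)]
    · simp only [gidx_zero, gidx_one]
    · simp only [gidx_zero, gidx_one]; omega
    · simp only [gidx_zero, gidx_one]; omega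
  rw [h1, eulerD_texp, coeff_mul, coeff_mul]
  refine Finset.sum_congr rfl fun p hp => ?_
  rw [Finset.HasAntidiagonal.mem_antidiagonal] at hp
  rw [coeff_fexp hA (N := d 0 + d 1 + 1)]
  rw [← hp]
  simp only [Finsupp.add_apply]; omega

noncomputable abbrev negE : GF →+* GF := rescale ![1, -1]

lemma coeff_negE (f : GF) (d : Fin 2 →₀ ℕ) : coeff d (negE f) = (-1) ^ (d 1) * coeff d f := by
  rw [coeff_rescale, Finsupp.prod_fintype _ _ (by simp)]
  simp

lemma negE_fexp (A : GF) : negE (fexp A) = fexp (negE A) := by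
  ext d
  rw [coeff_negE]
  change _ * (∑ n ∈ Finset.range (d 0 + d 1 + 1), (Nat.factorial n : ℚ)⁻¹ * coeff d (A ^ n)) =
    ∑ n ∈ Finset.range (d 0 + d 1 + 1), (Nat.factorial n : ℚ)⁻¹ * coeff d ((negE A) ^ n)
  rw [Finset.mul_sum]
  refine Finset.sum_congr rfl fun n _ => ?_
  rw [← map_pow, coeff_negE]; ring

lemma negE_shiftS (c : ℚ) (A : GF) : negE (shiftS c A) = shiftS (-c) (negE A) := by
  ext d
  rw [coeff_negE, coeff_shiftS, coeff_shiftS, Finset.mul_sum]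
  refine Finset.sum_congr rfl fun t ht => ?_
  have ht' : t ≤ d 1 := by rw [Finset.mem_range] at ht; omega
  rw [coeff_negE, gidx_one, neg_pow c]
  obtain ⟨s, hs⟩ := Nat.exists_eq_add_of_le ht'
  rw [hs, Nat.add_sub_cancel_left, pow_add]
  ring

def gAl (m n : ℕ) : Finset (Fin m → Fin (n + 1)) :=
  Finset.univ.filter (fun α : Fin m → Fin (n + 1) => ∀ i j : Fin m, i ≤ j → α i ≤ α j)

lemma gAl_card (m n : ℕ) : ((gAl m n).card : ℚ) ≠ 0 := by
  have : (0 : Fin m → Fin (n + 1)) ∈ gAl m n := by simp [gAl]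
  exact_mod_cast (Finset.card_pos.2 ⟨_, this⟩).ne'

def gsh (m n : ℕ) (α : Fin m → Fin (n + 1)) (j : Fin m) : ℚ :=
  (α j : ℚ) * m - (((j : ℕ) : ℚ) + 1 / 2) * n

def gflip {m n : ℕ} (α : Fin m → Fin (n + 1)) : Fin m → Fin (n + 1) :=
  fun j => Fin.rev (α (Fin.rev j))

lemma gflip_gflip {m n : ℕ} (α : Fin m → Fin (n + 1)) : gflip (gflip α) = α := by
  ext j; simp [gflip]

lemma gflip_mem {m n : ℕ} {α : Fin m → Fin (n + 1)} (h : α ∈ gAl m n) : gflip α ∈ gAl m n := by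
  simp only [gAl, Finset.mem_filter, Finset.mem_univ, true_and, gflip] at h ⊢
  intro i j hij
  rw [Fin.rev_le_rev]
  exact h _ _ (Fin.rev_le_rev.2 hij)

lemma gsh_flip {m n : ℕ} (α : Fin m → Fin (n + 1)) (j : Fin m) :
    gsh m n (gflip α) (Fin.rev j) = - gsh m n α j := by
  simp only [gsh, gflip, Fin.rev_rev, Fin.val_rev]
  have h1 : (α j : ℕ) ≤ n := by omega
  have h2 : (j : ℕ) + 1 ≤ m := by omega
  rw [show n + 1 - ((α j : ℕ) + 1) = n - α j by omega]
  push_cast [Nat.cast_sub h1, Nat.cast_sub h2]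
  ring

lemma diffEq_iff (m n : ℕ) (V : GF) : diffEq m n V ↔
    ∑ α ∈ gAl m n, fexp (∑ j, shiftS (gsh m n α j) V)
      = (Nat.choose (m + n) m : GF) * (1 + X 0) := Iff.rfl

lemma diffEq_negE {m n : ℕ} {V : GF} (h : diffEq m n V) : diffEq m n (negE V) := by
  classical
  rw [diffEq_iff] at h ⊢
  have h2 := congrArg negE h
  have hX : negE (X 0 : GF) = X 0 := by
    ext d
    rw [coeff_negE, coeff_X]
    split_ifs with hd
    · subst hd; simp
    · simp
  rw [map_mul, map_add, map_one, map_natCast, hX, map_sum] at h2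
  rw [← h2]
  refine Finset.sum_nbij' gflip gflip (fun _ => gflip_mem) (fun _ => gflip_mem)
    (fun _ _ => gflip_gflip _) (fun _ _ => gflip_gflip _) ?_
  intro α _
  rw [negE_fexp, map_sum]
  congr 1
  simp only [negE_shiftS]
  refine Fintype.sum_equiv Fin.revPerm _ _ fun j => ?_
  rw [Fin.revPerm_apply, gsh_flip, neg_neg]

lemma constCoeff_sumShift {m : ℕ} (c : Fin m → ℚ) {V : GF} (hV : constantCoeff V = 0) :
    constantCoeff (∑ j, shiftS (c j) V) = 0 := by
  rw [map_sum]
  exact Finset.sum_eq_zero fun j _ => by rw [constCoeff_shiftS, hV]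

lemma diffEq_unique {m n : ℕ} (hm : 0 < m) {V W : GF} (hV : constantCoeff V = 0)
    (hW : constantCoeff W = 0) (h1 : diffEq m n V) (h2 : diffEq m n W) : V = W := by
  rw [← sub_eq_zero]
  apply lex_ind
  intro d hd
  rw [diffEq_iff] at h1 h2
  have h3 := congrArg (coeff d) (h1.trans h2.symm)
  rw [map_sum, map_sum, ← sub_eq_zero, ← Finset.sum_sub_distrib] at h3
  have key : ∀ α ∈ gAl m n, coeff d (fexp (∑ j, shiftS (gsh m n α j) V))
      - coeff d (fexp (∑ j, shiftS (gsh m n α j) W)) = m * coeff d (V - W) := by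
    intro α _
    have hs := hd.sumShift (gsh m n α)
    simp only [shiftS_sub, Finset.sum_sub_distrib] at hs
    rw [coeff_fexp_sub (constCoeff_sumShift _ hV) (constCoeff_sumShift _ hW) d hs.1, hs.2]
  rw [Finset.sum_congr rfl key, Finset.sum_const, nsmul_eq_mul] at h3
  have hm' : (m : ℚ) ≠ 0 := by positivity
  rcases mul_eq_zero.1 h3 with h | h
  · exact absurd h (gAl_card m n)
  · exact (mul_eq_zero.1 h).resolve_left hm'

lemma eulerD_solution {m n : ℕ} (hm : 0 < m) {V : GF} (hV : constantCoeff V = 0)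
    (h : diffEq m n V) : eulerD V = C ((m : ℚ)⁻¹) := by
  have hm' : (m : ℚ) ≠ 0 := by positivity
  rw [← sub_eq_zero]
  apply lex_ind
  intro d hd
  rw [diffEq_iff] at h
  have hE := congrArg eulerD h
  have hR : eulerD ((Nat.choose (m + n) m : GF) * (1 + X 0))
      = (Nat.choose (m + n) m : GF) * (1 + X 0) := by
    rw [Derivation.leibniz, Derivation.map_natCast, map_add, Derivation.map_one_eq_zero]
    simp [eulerD]
  rw [hR, ← h, map_sum, ← sub_eq_zero, ← Finset.sum_sub_distrib] at hE
  have key : ∀ α ∈ gAl m n, coeff d (eulerD (fexp (∑ j, shiftS (gsh m n α j) V))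
      - fexp (∑ j, shiftS (gsh m n α j) V)) = m * coeff d (eulerD V - C ((m : ℚ)⁻¹)) := by
    intro α _
    have hs := hd.sumShift (gsh m n α)
    rw [eulerD_fexp (constCoeff_sumShift _ hV), map_sum]
    have : ∑ j, eulerD (shiftS (gsh m n α j) V)
        = (∑ j, shiftS (gsh m n α j) (eulerD V - C ((m : ℚ)⁻¹))) + 1 := by
      simp only [eulerD_shiftS, shiftS_sub, shiftS_C, Finset.sum_sub_distrib]
      have : ∑ j : Fin m, (C ((m : ℚ)⁻¹) : GF) = 1 := by
        rw [Finset.sum_const, nsmul_eq_mul, Finset.card_univ, Fintype.card_fin,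
          ← map_natCast (C (σ := Fin 2) (R := ℚ)), ← map_mul, mul_inv_cancel₀ hm', map_one]
      rw [this]; ring
    rw [this, mul_add, mul_one, add_sub_cancel_right, mul_comm, coeff_mul_low _ _ _ hs.1, hs.2,
      constCoeff_fexp, mul_one]
  have h3 := congrArg (coeff d) hE
  rw [map_sum, Finset.sum_congr rfl key, Finset.sum_const, nsmul_eq_mul, map_zero] at h3
  rcases mul_eq_zero.1 h3 with h | h
  · exact absurd h (gAl_card m n)
  · exact (mul_eq_zero.1 h).resolve_left hm'

lemma rec_solution {m n : ℕ} (hm : 0 < m) {V : GF} (hV : constantCoeff V = 0)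
    (h : diffEq m n V) (i k : ℕ) :
    ((i : ℚ) + 1) * coeff (gidx (i + 1) k) V + (i + k) * coeff (gidx i k) V
      = if i = 0 ∧ k = 0 then (m : ℚ)⁻¹ else 0 := by
  classical
  rw [← coeff_eulerD, eulerD_solution hm hV h, coeff_C]
  congr 1
  rw [eq_iff_iff]
  constructor
  · intro hh
    exact ⟨by rw [← gidx_zero i k, hh]; rfl, by rw [← gidx_one i k, hh]; rfl⟩
  · rintro ⟨rfl, rfl⟩; simp [gidx]

lemma rec_pow (i k : ℕ) :
    ((i : ℚ) + 1) * PowerSeries.coeff (i + 1) ((1 + PowerSeries.X : PowerSeries ℚ)⁻¹ ^ k)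
      + (i + k) * PowerSeries.coeff i ((1 + PowerSeries.X : PowerSeries ℚ)⁻¹ ^ k) = 0 := by
  set y := (1 + PowerSeries.X : PowerSeries ℚ)⁻¹ with hy
  have h1 : (1 + PowerSeries.X : PowerSeries ℚ) * y = 1 :=
    PowerSeries.mul_inv_cancel _ (by simp)
  have hd : PowerSeries.derivative ℚ y = - y ^ 2 := by
    rw [hy, PowerSeries.derivative_inv']; simp
  have h2 : (1 + PowerSeries.X : PowerSeries ℚ) * PowerSeries.derivative ℚ (y ^ k)
      = - ((k : PowerSeries ℚ) * y ^ k) := by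
    rw [Derivation.leibniz_pow, hd, smul_eq_mul, nsmul_eq_mul]
    rcases k with _ | k
    · simp
    · rw [Nat.add_sub_cancel]
      linear_combination (-((k + 1 : ℕ) : PowerSeries ℚ) * y ^ (k + 1)) * h1
  have h3 := congrArg (PowerSeries.coeff i) h2
  rw [add_mul, one_mul, map_add, PowerSeries.coeff_derivative, map_neg,
    ← map_natCast (PowerSeries.C (R := ℚ)), PowerSeries.coeff_C_mul] at h3
  have h4 : PowerSeries.coeff i (PowerSeries.X * PowerSeries.derivative ℚ (y ^ k))
      = i * PowerSeries.coeff i (y ^ k) := by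
    rcases i with _ | i
    · simp
    · rw [PowerSeries.coeff_succ_X_mul, PowerSeries.coeff_derivative]; push_cast; ring
  rw [h4] at h3
  linarith

/-- The unique zero-constant-term solution `V` of the difference equation satisfies:
(i) `V` contains only even powers of `E`;
(ii) the specialization of `V` at `E = 0` equals `(1/m)·log(1+X)`;
(iii) for every `g ≥ 1` the coefficient of `E^{2g}` in `V` equals `P_g·(1+X)^{-2g}`
for some rational number `P_g`. -/
theorem gap_form_of_solution (m n : ℕ) (hm : 0 < m) (hn : 0 < n) (hmn : Nat.Coprime m n)
    (V : MvPowerSeries (Fin 2) ℚ)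
    (hV0 : MvPowerSeries.constantCoeff V = 0) (hVeq : diffEq m n V) :
    (∀ i g : ℕ, MvPowerSeries.coeff
        (Finsupp.single 0 i + Finsupp.single 1 (2 * g + 1)) V = 0) ∧
    (∀ i : ℕ, MvPowerSeries.coeff (Finsupp.single 0 i) V
        = ((m : ℚ))⁻¹ * PowerSeries.coeff i logOneAdd) ∧
    (∀ g : ℕ, 1 ≤ g → ∃ P : ℚ, ∀ i : ℕ,
      MvPowerSeries.coeff (Finsupp.single 0 i + Finsupp.single 1 (2 * g)) V
        = P * PowerSeries.coeff i (((1 + PowerSeries.X : PowerSeries ℚ))⁻¹ ^ (2 * g))) := by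
  have hrec := rec_solution hm hV0 hVeq
  refine ⟨?_, ?_, ?_⟩
  · intro i g
    have hn0 : constantCoeff (negE V) = 0 := by
      rw [← coeff_zero_eq_constantCoeff_apply] at hV0 ⊢
      rw [coeff_negE, hV0, mul_zero]
    have hu := diffEq_unique hm hV0 hn0 hVeq (diffEq_negE hVeq)
    have h1 := congrArg (coeff (gidx i (2 * g + 1))) hu
    rw [coeff_negE, gidx_one, pow_succ, pow_mul] at h1
    change coeff (gidx i (2 * g + 1)) V = 0
    norm_num at h1
    linarith
  · intro i
    have h0 : ∀ i, coeff (Finsupp.single 0 i) V = coeff (gidx i 0) V := by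
      intro i; simp [gidx]
    rw [h0]
    induction i with
    | zero =>
      rw [← h0]
      simpa [logOneAdd] using hV0
    | succ i ih =>
      have h1 := hrec i 0
      rw [ih] at h1
      have hi : (i : ℚ) + 1 ≠ 0 := by positivity
      apply mul_left_cancel₀ hi
      simp only [logOneAdd, PowerSeries.coeff_mk] at h1 ⊢
      rcases i with _ | i
      · simp at h1 ⊢; exact h1
      · simp at h1
        rw [if_neg (by omega)]
        push_cast
        have hm' : (m : ℚ) ≠ 0 := by positivity
        have hi' : (i : ℚ) + 1 ≠ 0 := by positivity
        rw [eq_neg_of_add_eq_zero_left h1]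
        push_cast at hi
        field_simp
        ring
  · intro g hg
    refine ⟨coeff (gidx 0 (2 * g)) V, fun i => ?_⟩
    change coeff (gidx i (2 * g)) V = _
    induction i with
    | zero => simp
    | succ i ih =>
      have h1 := hrec i (2 * g)
      rw [if_neg (by omega), ih] at h1
      have h2 := rec_pow i (2 * g)
      have hi : (i : ℚ) + 1 ≠ 0 := by positivity
      apply mul_left_cancel₀ hi
      linear_combination h1 - coeff (gidx 0 (2 * g)) V * h2
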